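/- For every integer s ≥ 0, every C^∞ function u, and every bounded open set 𝒰 ⊆ ℝ², there exists a constant C > 0 (depending on s, u and 𝒰) such that for all v ∈ C₀^∞(𝒰): Σ_{i=1}^{3} ‖X_i v‖_{H^s}² ≤ C ( |(P_u v, v)_{H^s}| + ‖v‖_{H^s}² ). -/

import Mathlib

open MeasureTheory

/-- Partial derivative in the first (x) coordinate. -/
noncomputable def pdx (f : ℝ × ℝ → ℝ) : ℝ × ℝ → ℝ :=
  fun p => deriv (fun x => f (x, p.2)) p.1

/-- Partial derivative in the second (t) coordinate. -/
noncomputable def pdt (f : ℝ × ℝ → ℝ) : ℝ × ℝ → ℝ :=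
  fun p => deriv (fun t => f (p.1, t)) p.2

/-- The mixed partial derivative ∂ₓ^{α₁} ∂ₜ^{α₂}. -/
noncomputable def pderiv2 (α : ℕ × ℕ) (f : ℝ × ℝ → ℝ) : ℝ × ℝ → ℝ :=
  pdx^[α.1] (pdt^[α.2] f)

/-- The set of multi-indices of order at most `s`. -/
def multiIdx (s : ℕ) : Finset (ℕ × ℕ) :=
  (Finset.range (s + 1) ×ˢ Finset.range (s + 1)).filter fun α => α.1 + α.2 ≤ s

/-- Squared L² norm on ℝ². -/
noncomputable def L2normSq (f : ℝ × ℝ → ℝ) : ℝ := ∫ p : ℝ × ℝ, (f p) ^ 2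

/-- The Sobolev H^s norm: (Σ_{|α|≤s} ‖∂^α v‖²_{L²})^{1/2}. -/
noncomputable def sobolevNorm (s : ℕ) (f : ℝ × ℝ → ℝ) : ℝ :=
  Real.sqrt (∑ α ∈ multiIdx s, L2normSq (pderiv2 α f))

/-- The Sobolev H^s inner product: Σ_{|α|≤s} (∂^α v, ∂^α w)_{L²}. -/
noncomputable def sobolevInner (s : ℕ) (f g : ℝ × ℝ → ℝ) : ℝ :=
  ∑ α ∈ multiIdx s, ∫ p : ℝ × ℝ, pderiv2 α f p * pderiv2 α g p

/-- The vector fields X₁ = ∂ₓ, X₂ = xʳ∂ₜ, X₃ = xʳ h̃(x,t,u(x,t)) ∂ₜ. -/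
noncomputable def Xvf (r : ℕ) (h : ℝ × ℝ × ℝ → ℝ) (u : ℝ × ℝ → ℝ) :
    Fin 3 → (ℝ × ℝ → ℝ) → (ℝ × ℝ → ℝ)
  | 0 => fun v => pdx v
  | 1 => fun v => fun p => p.1 ^ r * pdt v p
  | 2 => fun v => fun p => p.1 ^ r * h (p.1, p.2, u p) * pdt v p

/-- The operator P_u v = X₁²v + X₂²v + X₃²v. -/
noncomputable def Pop (r : ℕ) (h : ℝ × ℝ × ℝ → ℝ) (u : ℝ × ℝ → ℝ)
    (v : ℝ × ℝ → ℝ) : ℝ × ℝ → ℝ :=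
  fun p => Xvf r h u 0 (Xvf r h u 0 v) p + Xvf r h u 1 (Xvf r h u 1 v) p
    + Xvf r h u 2 (Xvf r h u 2 v) p

/-! The estimate holds for each smooth vector field `X = a ∂ₓ + b ∂ₜ` separately. Its adjoint is
`-X - div X`, and moving it past a derivative `∂^α` costs `[∂^α, X]`, a differential operator of
order at most `|α|` rather than `|α| + 1`. Hence on functions supported in a fixed compact set
`(∂^α X² v, ∂^α v) + ‖∂^α X v‖²` is a sum of products of one factor bounded by `‖Xv‖_{H^s}` and one
bounded by `‖v‖_{H^s}`. Summing over `|α| ≤ s` gives `‖Xv‖² ≤ -(X² v, v)_{H^s} + C ‖Xv‖ ‖v‖`, and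
Young's inequality absorbs `‖Xv‖` on the left. Because this bound involves `(X² v, v)_{H^s}` without
an absolute value, it can be added over several vector fields before the absolute value is taken. -/

open scoped ContDiff Distributions InnerProductSpace NNReal
open Function

section TestFunctions

variable {E : Type*} [NormedAddCommGroup E] [NormedSpace ℝ E]

variable (E) in
/-- The algebra `C^∞(E)` of smooth real functions, the coefficients of our differential
operators. -/
def smoothFunctions : Subalgebra ℝ (E → ℝ) where
  carrier := {a | ContDiff ℝ ∞ a}
  mul_mem' {a b} (ha : ContDiff ℝ ∞ a) (hb : ContDiff ℝ ∞ b) := ha.mul hb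
  add_mem' {a b} (ha : ContDiff ℝ ∞ a) (hb : ContDiff ℝ ∞ b) := ha.add hb
  algebraMap_mem' c := (contDiff_const : ContDiff ℝ ∞ fun _ : E ↦ c)

lemma contDiff_coeff (a : smoothFunctions E) : ContDiff ℝ ∞ (a : E → ℝ) := a.2

/-- The derivative of a coefficient in the direction `w`. -/
noncomputable def coeffDeriv (w : E) (a : smoothFunctions E) : smoothFunctions E where
  val p := fderiv ℝ a.1 p w
  property := show ContDiff ℝ ∞ _ from
    ((contDiff_coeff a).fderiv_right (by simp)).clm_apply contDiff_const

variable {K : TopologicalSpace.Compacts E}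

noncomputable instance : SMul (smoothFunctions E) 𝓓_{K}(E, ℝ) where
  smul a f := .of_support_subset ((contDiff_coeff a).mul f.contDiff)
    ((support_mul_subset_right _ _).trans f.support_subset)

lemma smoothFunctions_smul_apply (a : smoothFunctions E) (f : 𝓓_{K}(E, ℝ)) (p : E) :
    (a • f) p = a.1 p * f p := rfl

noncomputable instance : Module (smoothFunctions E) 𝓓_{K}(E, ℝ) where
  one_smul f := by ext; simp [smoothFunctions_smul_apply]
  mul_smul a b f := by ext; simp [smoothFunctions_smul_apply, mul_assoc]
  smul_zero a := by ext; simp [smoothFunctions_smul_apply]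
  smul_add a f g := by ext; simp [smoothFunctions_smul_apply, mul_add]
  add_smul a b f := by ext; simp [smoothFunctions_smul_apply, add_mul]
  zero_smul f := by ext; simp [smoothFunctions_smul_apply]

instance : SMulCommClass ℝ (smoothFunctions E) 𝓓_{K}(E, ℝ) where
  smul_comm c a f := by ext; simp [smoothFunctions_smul_apply, mul_left_comm]

instance : IsScalarTower ℝ (smoothFunctions E) 𝓓_{K}(E, ℝ) where
  smul_assoc c a f := by ext p; exact mul_assoc c (a.1 p) (f p)

lemma differentiable_testFunction (f : 𝓓_{K}(E, ℝ)) : Differentiable ℝ f :=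
  f.contDiff.differentiable (by simp)

variable (K) in
/-- The derivative `∂_w` in the direction `w`, as an operator on test functions. -/
noncomputable def dirDeriv (w : E) : Module.End ℝ 𝓓_{K}(E, ℝ) :=
  ContDiffMapSupportedIn.postcompLM (ContinuousLinearMap.apply ℝ ℝ w) ∘ₗ
    ContDiffMapSupportedIn.fderivLM ℝ ⊤ ⊤

lemma coe_dirDeriv (w : E) (f : 𝓓_{K}(E, ℝ)) :
    ⇑(dirDeriv K w f) = fun p ↦ fderiv ℝ f p w := by
  ext p
  simp [dirDeriv]

lemma dirDeriv_add (v w : E) : dirDeriv K (v + w) = dirDeriv K v + dirDeriv K w := by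
  ext f p
  simp [coe_dirDeriv]

lemma dirDeriv_smul (c : ℝ) (w : E) : dirDeriv K (c • w) = c • dirDeriv K w := by
  ext f p
  simp [coe_dirDeriv]

lemma dirDeriv_commute (v w : E) : Commute (dirDeriv K v) (dirDeriv K w) := by
  ext f p
  have two_le : (2 : WithTop ℕ∞) ≤ ∞ := WithTop.coe_le_coe.2 (le_top : (2 : ℕ∞) ≤ ⊤)
  have hsymm : IsSymmSndFDerivAt ℝ f p :=
    f.contDiff.contDiffAt.isSymmSndFDerivAt (by simpa using two_le)
  have hdiff : DifferentiableAt ℝ (fderiv ℝ f) p :=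
    (f.contDiff.fderiv_right (m := ∞) (by simp)).differentiable (by simp) p
  simpa [coe_dirDeriv, fderiv_clm_apply hdiff] using hsymm v w

lemma dirDeriv_smul_apply (w : E) (a : smoothFunctions E) (f : 𝓓_{K}(E, ℝ)) :
    dirDeriv K w (a • f) = coeffDeriv w a • f + a • dirDeriv K w f := by
  ext p
  have ha : DifferentiableAt ℝ (a : E → ℝ) p := (contDiff_coeff a).differentiable (by simp) p
  have hmul : ⇑(a • f) = fun q ↦ a.1 q * f q := rfl
  simpa [coe_dirDeriv, hmul, fderiv_fun_mul ha (differentiable_testFunction f p),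
    smoothFunctions_smul_apply, coeffDeriv, mul_comm (f p)] using add_comm _ _

lemma dirDeriv_mul_smul (w : E) (a : smoothFunctions E) (L : Module.End ℝ 𝓓_{K}(E, ℝ)) :
    dirDeriv K w * (a • L) = coeffDeriv w a • L + a • (dirDeriv K w * L) :=
  LinearMap.ext fun f ↦ dirDeriv_smul_apply w a (L f)

end TestFunctions

section L2

variable {E : Type*} [NormedAddCommGroup E] [NormedSpace ℝ E] [MeasurableSpace E] [BorelSpace E]
  {K : TopologicalSpace.Compacts E} {μ : Measure E} [IsFiniteMeasureOnCompacts μ]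

lemma memLp_testFunction (f : 𝓓_{K}(E, ℝ)) : MemLp f 2 μ :=
  f.continuous.memLp_of_hasCompactSupport f.hasCompactSupport

variable (K μ) in
/-- The embedding of test functions into the Hilbert space `L²(μ)`. -/
noncomputable def testToL2 : 𝓓_{K}(E, ℝ) →ₗ[ℝ] Lp ℝ 2 μ where
  toFun f := (memLp_testFunction f).toLp f
  map_add' f g := (memLp_testFunction f).toLp_add (memLp_testFunction g)
  map_smul' c f := (memLp_testFunction f).toLp_const_smul c

lemma inner_testToL2 (f g : 𝓓_{K}(E, ℝ)) :
    ⟪testToL2 K μ f, testToL2 K μ g⟫_ℝ = ∫ p, f p * g p ∂μ := by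
  rw [L2.inner_def]
  refine integral_congr_ae ?_
  filter_upwards [(memLp_testFunction f).coeFn_toLp, (memLp_testFunction g).coeFn_toLp]
    with p hf hg
  simp [testToL2, hf, hg, mul_comm]

lemma inner_testToL2_smul_left (a : smoothFunctions E) (f g : 𝓓_{K}(E, ℝ)) :
    ⟪testToL2 K μ (a • f), testToL2 K μ g⟫_ℝ = ⟪testToL2 K μ f, testToL2 K μ (a • g)⟫_ℝ := by
  simp only [inner_testToL2, smoothFunctions_smul_apply, mul_left_comm, mul_assoc]

lemma exists_norm_testToL2_smul_le (a : smoothFunctions E) :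
    ∃ C : ℝ≥0, ∀ f : 𝓓_{K}(E, ℝ), ‖testToL2 K μ (a • f)‖ ≤ C * ‖testToL2 K μ f‖ := by
  obtain ⟨C, hC⟩ :=
    K.isCompact.exists_bound_of_continuousOn (contDiff_coeff a).continuous.continuousOn
  refine ⟨C.toNNReal, fun f ↦ Lp.norm_le_mul_norm_of_ae_le_mul ?_⟩
  filter_upwards [(memLp_testFunction f).coeFn_toLp, (memLp_testFunction (a • f)).coeFn_toLp]
    with p hf haf
  simp only [testToL2, LinearMap.coe_mk, AddHom.coe_mk, hf, haf, smoothFunctions_smul_apply,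
    norm_mul]
  by_cases hp : p ∈ K
  · gcongr
    exact (hC p hp).trans (Real.le_coe_toNNReal C)
  · simp [f.zero_on_compl hp]

end L2

section IntegrationByParts

variable {E : Type*} [NormedAddCommGroup E] [NormedSpace ℝ E] [FiniteDimensional ℝ E]
  [MeasurableSpace E] [BorelSpace E] {K : TopologicalSpace.Compacts E} {μ : Measure E}
  [μ.IsAddHaarMeasure]

lemma inner_testToL2_dirDeriv_left (w : E) (f g : 𝓓_{K}(E, ℝ)) :
    ⟪testToL2 K μ (dirDeriv K w f), testToL2 K μ g⟫_ℝ =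
      -⟪testToL2 K μ f, testToL2 K μ (dirDeriv K w g)⟫_ℝ := by
  have integrable_mul (f g : 𝓓_{K}(E, ℝ)) : Integrable (fun p ↦ f p * g p) μ :=
    (memLp_testFunction f).integrable_mul (memLp_testFunction g)
  have hf'g := integrable_mul (dirDeriv K w f) g
  have hfg' := integrable_mul f (dirDeriv K w g)
  simp only [inner_testToL2, coe_dirDeriv] at hf'g hfg' ⊢
  rw [integral_mul_fderiv_eq_neg_fderiv_mul_of_integrable hf'g hfg' (integrable_mul f g)
    (fun p _ ↦ differentiable_testFunction f p) (fun p _ ↦ differentiable_testFunction g p),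
    neg_neg]

lemma inner_testToL2_smul_dirDeriv_left (w : E) (a : smoothFunctions E) (f g : 𝓓_{K}(E, ℝ)) :
    ⟪testToL2 K μ (a • dirDeriv K w f), testToL2 K μ g⟫_ℝ =
      -⟪testToL2 K μ f, testToL2 K μ (coeffDeriv w a • g + a • dirDeriv K w g)⟫_ℝ := by
  rw [inner_testToL2_smul_left, inner_testToL2_dirDeriv_left, dirDeriv_smul_apply]

end IntegrationByParts

section DifferentialOperators

variable {K : TopologicalSpace.Compacts (ℝ × ℝ)}

lemma mem_multiIdx {s : ℕ} {α : ℕ × ℕ} : α ∈ multiIdx s ↔ α.1 + α.2 ≤ s := by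
  simp only [multiIdx, Finset.mem_filter, Finset.mem_product, Finset.mem_range]
  lia

variable (K) in
/-- The mixed derivative `∂ₓ^{α₁} ∂ₜ^{α₂}` as an operator on test functions, agreeing with
`pderiv2 α`. -/
noncomputable def multiDeriv (α : ℕ × ℕ) : Module.End ℝ 𝓓_{K}(ℝ × ℝ, ℝ) :=
  dirDeriv K (1, 0) ^ α.1 * dirDeriv K (0, 1) ^ α.2

lemma dirDeriv_fst_mul_multiDeriv (m n : ℕ) :
    dirDeriv K (1, 0) * multiDeriv K (m, n) = multiDeriv K (m + 1, n) := by
  rw [multiDeriv, multiDeriv, ← mul_assoc, ← pow_succ']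

lemma dirDeriv_snd_mul_multiDeriv (m n : ℕ) :
    dirDeriv K (0, 1) * multiDeriv K (m, n) = multiDeriv K (m, n + 1) := by
  rw [multiDeriv, multiDeriv, ← mul_assoc, ((dirDeriv_commute _ _).pow_right m).eq, mul_assoc,
    ← pow_succ']

variable (K) in
/-- Linear differential operators of order at most `s` with smooth coefficients. -/
noncomputable def diffOp (s : ℕ) :
    Submodule (smoothFunctions (ℝ × ℝ)) (Module.End ℝ 𝓓_{K}(ℝ × ℝ, ℝ)) :=
  Submodule.span _ (multiDeriv K '' multiIdx s)

lemma multiDeriv_mem_diffOp {s : ℕ} {α : ℕ × ℕ} (hα : α ∈ multiIdx s) :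
    multiDeriv K α ∈ diffOp K s :=
  Submodule.subset_span ⟨α, hα, rfl⟩

lemma diffOp_mono {s s' : ℕ} (h : s ≤ s') : diffOp K s ≤ diffOp K s' :=
  Submodule.span_mono <| Set.image_mono fun _ hα ↦ mem_multiIdx.2 <| (mem_multiIdx.1 hα).trans h

lemma dirDeriv_mul_multiDeriv_mem_diffOp (w : ℝ × ℝ) {s : ℕ} {α : ℕ × ℕ} (hα : α ∈ multiIdx s) :
    dirDeriv K w * multiDeriv K α ∈ diffOp K (s + 1) := by
  have hw : w = w.1 • (1, 0) + w.2 • (0, 1) := by ext <;> simp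
  have hx : multiDeriv K (α.1 + 1, α.2) ∈ diffOp K (s + 1) :=
    multiDeriv_mem_diffOp (by grind [mem_multiIdx])
  have ht : multiDeriv K (α.1, α.2 + 1) ∈ diffOp K (s + 1) :=
    multiDeriv_mem_diffOp (by grind [mem_multiIdx])
  rw [hw, dirDeriv_add, dirDeriv_smul, dirDeriv_smul, add_mul, smul_mul_assoc, smul_mul_assoc,
    dirDeriv_fst_mul_multiDeriv, dirDeriv_snd_mul_multiDeriv]
  exact add_mem (Submodule.smul_of_tower_mem _ _ hx) (Submodule.smul_of_tower_mem _ _ ht)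

lemma dirDeriv_mul_mem_diffOp (w : ℝ × ℝ) {s : ℕ} {L : Module.End ℝ 𝓓_{K}(ℝ × ℝ, ℝ)}
    (hL : L ∈ diffOp K s) : dirDeriv K w * L ∈ diffOp K (s + 1) := by
  induction hL using Submodule.span_induction with
  | mem L hL =>
    obtain ⟨α, hα, rfl⟩ := hL
    exact dirDeriv_mul_multiDeriv_mem_diffOp w hα
  | zero => simp
  | add L M _ _ ihL ihM => simpa only [mul_add] using add_mem ihL ihM
  | smul a L hL ih =>
    rw [dirDeriv_mul_smul]
    exact add_mem (Submodule.smul_mem _ _ (diffOp_mono s.le_succ hL)) (Submodule.smul_mem _ _ ih)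

variable (K) in
/-- The vector field `a ∂ₓ + b ∂ₜ` as an operator on test functions. -/
noncomputable def vectorField (a b : smoothFunctions (ℝ × ℝ)) :
    Module.End ℝ 𝓓_{K}(ℝ × ℝ, ℝ) :=
  a • dirDeriv K (1, 0) + b • dirDeriv K (0, 1)

lemma vectorField_mul_mem_diffOp (a b : smoothFunctions (ℝ × ℝ)) {s : ℕ}
    {L : Module.End ℝ 𝓓_{K}(ℝ × ℝ, ℝ)} (hL : L ∈ diffOp K s) :
    vectorField K a b * L ∈ diffOp K (s + 1) := by
  rw [vectorField, add_mul]
  exact add_mem (Submodule.smul_mem _ a (dirDeriv_mul_mem_diffOp _ hL))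
    (Submodule.smul_mem _ b (dirDeriv_mul_mem_diffOp _ hL))

lemma lie_dirDeriv_vectorField (w : ℝ × ℝ) (a b : smoothFunctions (ℝ × ℝ)) :
    ⁅dirDeriv K w, vectorField K a b⁆ = vectorField K (coeffDeriv w a) (coeffDeriv w b) := by
  have smul_dirDeriv_mul (c : smoothFunctions (ℝ × ℝ)) (v : ℝ × ℝ) :
      c • dirDeriv K v * dirDeriv K w = c • (dirDeriv K w * dirDeriv K v) := by
    rw [(dirDeriv_commute w v).eq]; rfl
  rw [Ring.lie_def, vectorField, vectorField, mul_add, add_mul, dirDeriv_mul_smul,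
    dirDeriv_mul_smul, smul_dirDeriv_mul, smul_dirDeriv_mul]
  abel

lemma lie_dirDeriv_mul_mem_diffOp (w : ℝ × ℝ) (a b : smoothFunctions (ℝ × ℝ)) {s : ℕ}
    {L : Module.End ℝ 𝓓_{K}(ℝ × ℝ, ℝ)} (hL : L ∈ diffOp K s)
    (hLie : ⁅L, vectorField K a b⁆ ∈ diffOp K s) :
    ⁅dirDeriv K w * L, vectorField K a b⁆ ∈ diffOp K (s + 1) := by
  have leibniz : ⁅dirDeriv K w * L, vectorField K a b⁆ =
      dirDeriv K w * ⁅L, vectorField K a b⁆ + ⁅dirDeriv K w, vectorField K a b⁆ * L := by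
    simp only [Ring.lie_def]
    noncomm_ring
  rw [leibniz, lie_dirDeriv_vectorField]
  exact add_mem (dirDeriv_mul_mem_diffOp w hLie) (vectorField_mul_mem_diffOp _ _ hL)

lemma lie_multiDeriv_vectorField_mem_diffOp (a b : smoothFunctions (ℝ × ℝ)) (m n : ℕ) :
    ⁅multiDeriv K (m, n), vectorField K a b⁆ ∈ diffOp K (m + n) := by
  have multiDeriv_mem (m n : ℕ) : multiDeriv K (m, n) ∈ diffOp K (m + n) :=
    multiDeriv_mem_diffOp (mem_multiIdx.2 le_rfl)
  induction m with
  | zero =>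
    induction n with
    | zero => simp [multiDeriv, Ring.lie_def]
    | succ n ih =>
      rw [← dirDeriv_snd_mul_multiDeriv]
      exact lie_dirDeriv_mul_mem_diffOp _ a b (multiDeriv_mem 0 n) ih
  | succ m ih =>
    rw [← dirDeriv_fst_mul_multiDeriv, Nat.add_right_comm]
    exact lie_dirDeriv_mul_mem_diffOp _ a b (multiDeriv_mem m n) ih

end DifferentialOperators

section Sobolev

variable {K : TopologicalSpace.Compacts (ℝ × ℝ)}

lemma coe_dirDeriv_fst (f : 𝓓_{K}(ℝ × ℝ, ℝ)) : ⇑(dirDeriv K (1, 0) f) = pdx f := by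
  ext p
  have hline : HasDerivAt (fun x : ℝ ↦ (x, p.2)) (1, 0) p.1 :=
    (hasDerivAt_id _).prodMk (hasDerivAt_const _ _)
  have hf : HasFDerivAt f (fderiv ℝ f p) (p.1, p.2) :=
    (differentiable_testFunction f p).hasFDerivAt
  rw [coe_dirDeriv]
  exact (hf.comp_hasDerivAt p.1 hline).deriv.symm

lemma coe_dirDeriv_snd (f : 𝓓_{K}(ℝ × ℝ, ℝ)) : ⇑(dirDeriv K (0, 1) f) = pdt f := by
  ext p
  have hline : HasDerivAt (fun t : ℝ ↦ (p.1, t)) (0, 1) p.2 :=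
    (hasDerivAt_const _ _).prodMk (hasDerivAt_id _)
  have hf : HasFDerivAt f (fderiv ℝ f p) (p.1, p.2) :=
    (differentiable_testFunction f p).hasFDerivAt
  rw [coe_dirDeriv]
  exact (hf.comp_hasDerivAt p.2 hline).deriv.symm

lemma coe_multiDeriv (α : ℕ × ℕ) (f : 𝓓_{K}(ℝ × ℝ, ℝ)) : ⇑(multiDeriv K α f) = pderiv2 α f := by
  have hx : Semiconj (fun f : 𝓓_{K}(ℝ × ℝ, ℝ) ↦ ⇑f) (dirDeriv K (1, 0)) pdx := coe_dirDeriv_fst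
  have ht : Semiconj (fun f : 𝓓_{K}(ℝ × ℝ, ℝ) ↦ ⇑f) (dirDeriv K (0, 1)) pdt := coe_dirDeriv_snd
  simp only [multiDeriv, pderiv2, Module.End.mul_apply, Module.End.pow_apply]
  rw [← (ht.iterate_right α.2).eq f, ← (hx.iterate_right α.1).eq]

lemma sobolevInner_coe (s : ℕ) (f g : 𝓓_{K}(ℝ × ℝ, ℝ)) :
    sobolevInner s f g = ∑ α ∈ multiIdx s,
      ⟪testToL2 K volume (multiDeriv K α f), testToL2 K volume (multiDeriv K α g)⟫_ℝ := by
  simp only [sobolevInner, inner_testToL2, coe_multiDeriv]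

lemma sobolevNorm_coe_sq (s : ℕ) (f : 𝓓_{K}(ℝ × ℝ, ℝ)) :
    sobolevNorm s f ^ 2 = ∑ α ∈ multiIdx s, ‖testToL2 K volume (multiDeriv K α f)‖ ^ 2 := by
  have L2normSq_nonneg (g : ℝ × ℝ → ℝ) : 0 ≤ L2normSq g := integral_nonneg fun p ↦ sq_nonneg (g p)
  rw [sobolevNorm, Real.sq_sqrt (Finset.sum_nonneg fun α _ ↦ L2normSq_nonneg _)]
  simp only [L2normSq, ← real_inner_self_eq_norm_sq, inner_testToL2, coe_multiDeriv, ← pow_two]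

lemma sobolevInner_sum_left {ι : Type*} (t : Finset ι) (s : ℕ) (f : ι → 𝓓_{K}(ℝ × ℝ, ℝ))
    (g : 𝓓_{K}(ℝ × ℝ, ℝ)) :
    sobolevInner s (∑ i ∈ t, ⇑(f i)) g = ∑ i ∈ t, sobolevInner s (f i) g := by
  have coe_sum : ∑ i ∈ t, ⇑(f i) = ⇑(∑ i ∈ t, f i) :=
    (map_sum (FunLike.coeAddMonoidHom 𝓓_{K}(ℝ × ℝ, ℝ) (ℝ × ℝ) ℝ) f t).symm
  simp only [coe_sum, sobolevInner_coe, map_sum, sum_inner]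
  exact Finset.sum_comm

lemma norm_testToL2_multiDeriv_le {s : ℕ} {α : ℕ × ℕ} (hα : α ∈ multiIdx s)
    (f : 𝓓_{K}(ℝ × ℝ, ℝ)) : ‖testToL2 K volume (multiDeriv K α f)‖ ≤ sobolevNorm s f := by
  refine (sq_le_sq₀ (norm_nonneg _) (Real.sqrt_nonneg _)).1 ?_
  rw [← sobolevNorm, sobolevNorm_coe_sq]
  exact Finset.single_le_sum (f := fun α ↦ ‖testToL2 K volume (multiDeriv K α f)‖ ^ 2)
    (fun _ _ ↦ sq_nonneg _) hα

lemma exists_norm_testToL2_le_sobolevNorm {s : ℕ} {L : Module.End ℝ 𝓓_{K}(ℝ × ℝ, ℝ)}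
    (hL : L ∈ diffOp K s) :
    ∃ C : ℝ≥0, ∀ f, ‖testToL2 K volume (L f)‖ ≤ C * sobolevNorm s f := by
  induction hL using Submodule.span_induction with
  | mem L hL =>
    obtain ⟨α, hα, rfl⟩ := hL
    exact ⟨1, fun f ↦ by simpa using norm_testToL2_multiDeriv_le hα f⟩
  | zero => exact ⟨0, fun f ↦ by simp⟩
  | add L M _ _ ihL ihM =>
    obtain ⟨C, hC⟩ := ihL
    obtain ⟨D, hD⟩ := ihM
    refine ⟨C + D, fun f ↦ ?_⟩
    rw [LinearMap.add_apply, map_add, NNReal.coe_add, add_mul]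
    exact norm_add_le_of_le (hC f) (hD f)
  | smul a L _ ih =>
    obtain ⟨C, hC⟩ := ih
    obtain ⟨D, hD⟩ := exists_norm_testToL2_smul_le (K := K) (μ := volume) a
    refine ⟨D * C, fun f ↦ (hD (L f)).trans ?_⟩
    rw [NNReal.coe_mul, mul_assoc]
    exact mul_le_mul_of_nonneg_left (hC f) D.coe_nonneg

end Sobolev

section EnergyEstimate

variable {K : TopologicalSpace.Compacts (ℝ × ℝ)} (a b : smoothFunctions (ℝ × ℝ))

/-- The divergence `∂ₓa + ∂ₜb` of the vector field `a ∂ₓ + b ∂ₜ`. -/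
noncomputable def divergence : smoothFunctions (ℝ × ℝ) :=
  coeffDeriv (1, 0) a + coeffDeriv (0, 1) b

lemma inner_testToL2_vectorField_left (f g : 𝓓_{K}(ℝ × ℝ, ℝ)) :
    ⟪testToL2 K volume (vectorField K a b f), testToL2 K volume g⟫_ℝ =
      -⟪testToL2 K volume f, testToL2 K volume (vectorField K a b g + divergence a b • g)⟫_ℝ := by
  simp only [vectorField, divergence, LinearMap.add_apply, LinearMap.smul_apply, add_smul, map_add,
    inner_add_left, inner_add_right, inner_testToL2_smul_dirDeriv_left]
  ring

lemma inner_testToL2_comp_vectorField_sq_add_norm_sq (L : Module.End ℝ 𝓓_{K}(ℝ × ℝ, ℝ))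
    (f : 𝓓_{K}(ℝ × ℝ, ℝ)) :
    ⟪testToL2 K volume (L (vectorField K a b (vectorField K a b f))), testToL2 K volume (L f)⟫_ℝ +
        ‖testToL2 K volume (L (vectorField K a b f))‖ ^ 2 =
      ⟪testToL2 K volume (L (vectorField K a b f)),
          testToL2 K volume ((⁅L, vectorField K a b⁆ - divergence a b • L) f)⟫_ℝ +
        ⟪testToL2 K volume (⁅L, vectorField K a b⁆ (vectorField K a b f)),
          testToL2 K volume (L f)⟫_ℝ := by
  have lie_apply (g : 𝓓_{K}(ℝ × ℝ, ℝ)) :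
      L (vectorField K a b g) = vectorField K a b (L g) + ⁅L, vectorField K a b⁆ g := by
    simp [Ring.lie_def]
  rw [lie_apply (vectorField K a b f), map_add, inner_add_left, inner_testToL2_vectorField_left,
    ← real_inner_self_eq_norm_sq, eq_sub_of_add_eq (lie_apply f).symm]
  simp only [LinearMap.sub_apply, LinearMap.smul_apply, map_add, map_sub, inner_add_right,
    inner_sub_right]
  ring

lemma exists_abs_inner_testToL2_comp_vectorField_sq_add_norm_sq_le {s : ℕ}
    {L : Module.End ℝ 𝓓_{K}(ℝ × ℝ, ℝ)} (hL : L ∈ diffOp K s)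
    (hLie : ⁅L, vectorField K a b⁆ ∈ diffOp K s) :
    ∃ C : ℝ≥0, ∀ f,
      |⟪testToL2 K volume (L (vectorField K a b (vectorField K a b f))),
            testToL2 K volume (L f)⟫_ℝ +
          ‖testToL2 K volume (L (vectorField K a b f))‖ ^ 2| ≤
        C * (sobolevNorm s (vectorField K a b f) * sobolevNorm s f) := by
  obtain ⟨C, hC⟩ := exists_norm_testToL2_le_sobolevNorm hL
  obtain ⟨D, hD⟩ := exists_norm_testToL2_le_sobolevNorm hLie
  obtain ⟨D', hD'⟩ := exists_norm_testToL2_le_sobolevNorm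
    (sub_mem hLie (Submodule.smul_mem _ (divergence a b) hL))
  refine ⟨C * D' + D * C, fun f ↦ ?_⟩
  rw [inner_testToL2_comp_vectorField_sq_add_norm_sq]
  set g := vectorField K a b f
  calc
    _ ≤ ‖testToL2 K volume (L g)‖ *
            ‖testToL2 K volume ((⁅L, vectorField K a b⁆ - divergence a b • L) f)‖ +
          ‖testToL2 K volume (⁅L, vectorField K a b⁆ g)‖ * ‖testToL2 K volume (L f)‖ :=
      (abs_add_le _ _).trans <|
        add_le_add (abs_real_inner_le_norm _ _) (abs_real_inner_le_norm _ _)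
    _ ≤ C * sobolevNorm s g * (D' * sobolevNorm s f) +
          D * sobolevNorm s g * (C * sobolevNorm s f) :=
      add_le_add
        (mul_le_mul_of_nonneg (hC g) (hD' f) (norm_nonneg _) ((norm_nonneg _).trans (hD' f)))
        (mul_le_mul_of_nonneg (hD g) (hC f) (norm_nonneg _) ((norm_nonneg _).trans (hC f)))
    _ = _ := by push_cast; ring

lemma exists_abs_sobolevInner_vectorField_sq_add_sobolevNorm_sq_le (s : ℕ) :
    ∃ C : ℝ≥0, ∀ f : 𝓓_{K}(ℝ × ℝ, ℝ),
      |sobolevInner s (vectorField K a b (vectorField K a b f)) f +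
          sobolevNorm s (vectorField K a b f) ^ 2| ≤
        C * (sobolevNorm s (vectorField K a b f) * sobolevNorm s f) := by
  have lie_mem (α : multiIdx s) : ⁅multiDeriv K α, vectorField K a b⁆ ∈ diffOp K s :=
    diffOp_mono (mem_multiIdx.1 α.2) (lie_multiDeriv_vectorField_mem_diffOp a b _ _)
  choose C hC using fun α : multiIdx s ↦
    exists_abs_inner_testToL2_comp_vectorField_sq_add_norm_sq_le a b
      (multiDeriv_mem_diffOp α.2) (lie_mem α)
  refine ⟨∑ α, C α, fun f ↦ ?_⟩
  rw [sobolevInner_coe, sobolevNorm_coe_sq, ← Finset.sum_add_distrib, ← Finset.sum_coe_sort,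
    NNReal.coe_sum, Finset.sum_mul]
  exact (Finset.abs_sum_le_sum_abs _ _).trans (Finset.sum_le_sum fun α _ ↦ hC α f)

lemma exists_sobolevNorm_vectorField_sq_le (s : ℕ) :
    ∃ C : ℝ≥0, ∀ f : 𝓓_{K}(ℝ × ℝ, ℝ),
      sobolevNorm s (vectorField K a b f) ^ 2 ≤
        -2 * sobolevInner s (vectorField K a b (vectorField K a b f)) f +
          C * sobolevNorm s f ^ 2 := by
  obtain ⟨C, hC⟩ := exists_abs_sobolevInner_vectorField_sq_add_sobolevNorm_sq_le (K := K) a b s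
  refine ⟨C ^ 2, fun f ↦ ?_⟩
  have energy := (le_abs_self _).trans (hC f)
  have young := two_mul_le_add_sq (sobolevNorm s (vectorField K a b f)) (C * sobolevNorm s f)
  push_cast
  linarith

end EnergyEstimate

/-- `X` is a first-order operator `a ∂ₓ + b ∂ₜ` with smooth coefficients `a` and `b`. It acts on
all functions, through `pdx` and `pdt`, and hence has junk values off the differentiable ones. -/
def IsSmoothVectorField (X : (ℝ × ℝ → ℝ) → ℝ × ℝ → ℝ) : Prop :=
  ∃ a b : smoothFunctions (ℝ × ℝ), ∀ v p, X v p = a.1 p * pdx v p + b.1 p * pdt v p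

lemma coe_vectorField {X : (ℝ × ℝ → ℝ) → ℝ × ℝ → ℝ} {a b : smoothFunctions (ℝ × ℝ)}
    (hX : ∀ v p, X v p = a.1 p * pdx v p + b.1 p * pdt v p) {K : TopologicalSpace.Compacts (ℝ × ℝ)}
    (f : 𝓓_{K}(ℝ × ℝ, ℝ)) : ⇑(vectorField K a b f) = X f := by
  ext p
  rw [hX, ← coe_dirDeriv_fst, ← coe_dirDeriv_snd]
  rfl

lemma isSmoothVectorField_Xvf (r : ℕ) {h : ℝ × ℝ × ℝ → ℝ} (hh : ContDiff ℝ ∞ h)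
    {u : ℝ × ℝ → ℝ} (hu : ContDiff ℝ ∞ u) (i : Fin 3) : IsSmoothVectorField (Xvf r h u i) := by
  have hpow : ContDiff ℝ ∞ fun p : ℝ × ℝ ↦ p.1 ^ r := contDiff_fst.pow r
  have hcomp : ContDiff ℝ ∞ fun p : ℝ × ℝ ↦ h (p.1, p.2, u p) :=
    hh.comp (contDiff_fst.prodMk (contDiff_snd.prodMk hu))
  fin_cases i
  · exact ⟨1, 0, fun v p ↦ by simp [Xvf]⟩
  · exact ⟨0, ⟨_, hpow⟩, fun v p ↦ by simp [Xvf]⟩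
  · exact ⟨0, ⟨_, hpow.mul hcomp⟩, fun v p ↦ by simp [Xvf]⟩

lemma Pop_eq_sum (r : ℕ) (h : ℝ × ℝ × ℝ → ℝ) (u v : ℝ × ℝ → ℝ) :
    Pop r h u v = ∑ i, Xvf r h u i (Xvf r h u i v) := by
  ext p
  simp [Pop, Fin.sum_univ_three]

theorem apriori_estimate_one_general {ι : Type*} [Fintype ι] {X : ι → (ℝ × ℝ → ℝ) → ℝ × ℝ → ℝ}
    (hX : ∀ i, IsSmoothVectorField (X i)) (s : ℕ) {K : Set (ℝ × ℝ)} (hK : IsCompact K) :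
    ∃ C > 0, ∀ v : ℝ × ℝ → ℝ, ContDiff ℝ ∞ v → tsupport v ⊆ K →
      ∑ i, sobolevNorm s (X i v) ^ 2 ≤
        C * (|sobolevInner s (∑ i, X i (X i v)) v| + sobolevNorm s v ^ 2) := by
  choose a b hab using hX
  choose C hC using fun i ↦ exists_sobolevNorm_vectorField_sq_le (K := ⟨K, hK⟩) (a i) (b i) s
  refine ⟨2 + ∑ i, C i, by positivity, fun v hv hvK ↦ ?_⟩
  let f : 𝓓_{⟨K, hK⟩}(ℝ × ℝ, ℝ) := .of_support_subset hv (subset_closure.trans hvK)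
  have hXf (i : ι) (g : 𝓓_{⟨K, hK⟩}(ℝ × ℝ, ℝ)) : X i g = vectorField _ (a i) (b i) g :=
    (coe_vectorField (hab i) g).symm
  change ∑ i, sobolevNorm s (X i f) ^ 2 ≤
    (2 + ∑ i, C i) * (|sobolevInner s (∑ i, X i (X i f)) f| + sobolevNorm s f ^ 2)
  simp only [hXf, sobolevInner_sum_left]
  set I := ∑ i, sobolevInner s (vectorField _ (a i) (b i) (vectorField _ (a i) (b i) f)) f
  calc
    _ ≤ -2 * I + (∑ i, C i) * sobolevNorm s f ^ 2 := by
      rw [NNReal.coe_sum, Finset.sum_mul, Finset.mul_sum, ← Finset.sum_add_distrib]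
      exact Finset.sum_le_sum fun i _ ↦ hC i f
    _ ≤ 2 * |I| + (∑ i, C i) * sobolevNorm s f ^ 2 := by linarith [neg_le_abs I]
    _ ≤ _ := by nlinarith [abs_nonneg I, sq_nonneg (sobolevNorm s f), (∑ i, C i).coe_nonneg]

/-- the subelliptic a priori estimate
Σᵢ ‖Xᵢv‖²_{H^s} ≤ C(|(P_u v, v)_{H^s}| + ‖v‖²_{H^s}) for v ∈ C₀^∞(𝒰). -/
theorem apriori_estimate_one
    (r : ℕ) (hr : 0 < r) (h : ℝ × ℝ × ℝ → ℝ) (hh : AnalyticOnNhd ℝ h Set.univ)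
    (s : ℕ) (u : ℝ × ℝ → ℝ) (hu : ContDiff ℝ (⊤ : ℕ∞) u)
    (𝒰 : Set (ℝ × ℝ)) (h𝒰 : IsOpen 𝒰) (hb : Bornology.IsBounded 𝒰) :
    ∃ C > 0, ∀ v : ℝ × ℝ → ℝ,
      ContDiff ℝ (⊤ : ℕ∞) v → HasCompactSupport v → tsupport v ⊆ 𝒰 →
      ∑ i : Fin 3, (sobolevNorm s (Xvf r h u i v)) ^ 2 ≤
        C * (|sobolevInner s (Pop r h u v) v| + (sobolevNorm s v) ^ 2) := by
  obtain ⟨C, hC, estimate⟩ := apriori_estimate_one_general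
    (isSmoothVectorField_Xvf r hh.contDiff hu) s hb.isCompact_closure
  refine ⟨C, hC, fun v hv _ hvU ↦ ?_⟩
  rw [Pop_eq_sum]
  exact estimate v hv (hvU.trans subset_closure)
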